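/- arXiv:2403.00518 — 2 statements merged into one kernel-verified Lean document; each statement's English description precedes it below -/
import Mathlib

section
/- Let K be a field of characteristic zero and F ⊆ K a subfield. Let q : F → K be a quadratic function and φ₁, φ₂ : F → K homomorphisms, not identically zero, such that q(xy) = φ₁(x)φ₂(x)q(y) + φ₁(y)φ₂(y)q(x) for all x, y ∈ F. Then there exists an additive function a : F → K with a(1) = 0 such that q(x) = 2(φ₁(x)+φ₂(x))a(x) − a(x²) for all x ∈ F, and a satisfies the identity 2a(xyz) − (φ₁(x)+φ₂(x))a(yz) − (φ₁(y)+φ₂(y))a(xz) − (φ₁(z)+φ₂(z))a(xy) + (φ₁(x)φ₂(y)+φ₂(x)φ₁(y))a(z) + (φ₁(x)φ₂(z)+φ₂(x)φ₁(z))a(y) + (φ₁(y)φ₂(z)+φ₂(y)φ₁(z))a(x) = 0 for all x, y, z ∈ F. Conversely, if a : F → K is additive and satisfies this identity with the homomorphisms φ₁, φ₂, then q(x) := 2(φ₁(x)+φ₂(x))a(x) − a(x²) is a quadratic function satisfying q(xy) = φ₁(x)φ₂(x)q(y) + φ₁(y)φ₂(y)q(x) for all x, y ∈ F. -/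
/-- `B : F → F → K` is symmetric and additive in each variable. -/
def IsSymmBiadditive {K : Type*} [Field K] (F : Subfield K) (B : F → F → K) : Prop :=
  (∀ x y : F, B x y = B y x) ∧
  (∀ x y z : F, B (x + y) z = B x z + B y z) ∧
  (∀ x y z : F, B x (y + z) = B x y + B x z)

/-- `q : F → K` is a quadratic function: the trace of a symmetric bi-additive map. -/
def IsQuadratic {K : Type*} [Field K] (F : Subfield K) (q : F → K) : Prop :=
  ∃ B : F → F → K, IsSymmBiadditive F B ∧ ∀ x : F, q x = B x x

/-- `φ : F → K` is a (ring) homomorphism: additive and multiplicative. -/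
def IsHom {K : Type*} [Field K] (F : Subfield K) (φ : F → K) : Prop :=
  (∀ x y : F, φ (x + y) = φ x + φ y) ∧ (∀ x y : F, φ (x * y) = φ x * φ y)

/-- The identity (♠) for an additive function `a` and homomorphisms `φ₁, φ₂`. -/
def SpadeIdentity {K : Type*} [Field K] (F : Subfield K) (φ₁ φ₂ a : F → K) : Prop :=
  ∀ x y z : F,
    2 * a (x * y * z)
      - (φ₁ x + φ₂ x) * a (y * z)
      - (φ₁ y + φ₂ y) * a (x * z)
      - (φ₁ z + φ₂ z) * a (x * y)
      + (φ₁ x * φ₂ y + φ₂ x * φ₁ y) * a z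
      + (φ₁ x * φ₂ z + φ₂ x * φ₁ z) * a y
      + (φ₁ y * φ₂ z + φ₂ y * φ₁ z) * a x = 0

/-!
Write `σ = φ₁ + φ₂`. If `q x = B x x`, polarizing the Leibniz rule for `q` gives
`B (x * y) (z * w) + B (x * w) (z * y) =
  (φ₁ x * φ₂ z + φ₂ x * φ₁ z) * B y w + (φ₁ y * φ₂ w + φ₂ y * φ₁ w) * B x z`.
Both `φ₁ 1` and `φ₂ 1` act as the identity on the values of `B`. Hence, with `a = B 1`, the case
`z = w = 1` recovers `B` from `a` as its Leibniz defect
`B x y = σ x * a y + σ y * a x - a (x * y)`, and substituting this into the case `w = 1` gives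
the identity (♠) for `a`.
Conversely, (♠) at `(x * y, x, y)`, `(x * x, y, y)`, `(y * y, x, x)`, `(x, x, y)` and `(x, y, y)`
combines to the Leibniz rule for the diagonal of the Leibniz defect of `a`.
-/

section LeibnizDefect

variable {R K : Type*}

/-- `q` is a derivation along the multiplicative function `φ₁ * φ₂`; this is the multiplicative
equation imposed on quadratic functions. -/
def TwistedLeibniz [Mul R] [Semiring K] (φ₁ φ₂ q : R → K) : Prop :=
  ∀ x y, q (x * y) = φ₁ x * φ₂ x * q y + φ₁ y * φ₂ y * q x

/-- The identity (♠) with an arbitrary ring `R` in place of the subfield. For `φ₁ = φ₂ = id` it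
is twice the identity characterizing derivations of order at most two. -/
def SecondOrderIdentity [Mul R] [Ring K] (φ₁ φ₂ a : R → K) : Prop :=
  ∀ x y z,
    2 * a (x * y * z)
      - (φ₁ x + φ₂ x) * a (y * z)
      - (φ₁ y + φ₂ y) * a (x * z)
      - (φ₁ z + φ₂ z) * a (x * y)
      + (φ₁ x * φ₂ y + φ₂ x * φ₁ y) * a z
      + (φ₁ x * φ₂ z + φ₂ x * φ₁ z) * a y
      + (φ₁ y * φ₂ z + φ₂ y * φ₁ z) * a x = 0

/-- Quadratic functions between additive monoids, as diagonals of symmetric biadditive maps.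
This is stronger than being a `QuadraticMap ℕ R K` when `2` is not invertible on `K`. -/
def IsBiadditiveDiagonal [AddZeroClass R] [AddCommMonoid K] (q : R → K) : Prop :=
  ∃ B : R →+ R →+ K, (∀ x y, B x y = B y x) ∧ ∀ x, q x = B x x

/-- The biadditive map `(x, y) ↦ σ x * a y + σ y * a x - a (x * y)`, which measures how far `a` is
from being a derivation along `σ`. -/
def leibnizDefect [NonUnitalNonAssocSemiring R] [NonUnitalNonAssocRing K] (σ a : R →+ K) :
    R →+ R →+ K :=
  let σa := (AddMonoidHom.mul.comp σ).compl₂ a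
  σa + σa.flip - AddMonoidHom.mul.compr₂ a

theorem leibnizDefect_apply [NonUnitalNonAssocSemiring R] [NonUnitalNonAssocRing K]
    (σ a : R →+ K) (x y : R) :
    leibnizDefect σ a x y = σ x * a y + σ y * a x - a (x * y) :=
  rfl

theorem leibnizDefect_comm [NonUnitalNonAssocCommSemiring R] [NonUnitalNonAssocRing K]
    (σ a : R →+ K) (x y : R) : leibnizDefect σ a x y = leibnizDefect σ a y x := by
  rw [leibnizDefect_apply, leibnizDefect_apply, mul_comm y x, add_comm (σ y * a x)]

theorem leibnizDefect_self [Semiring R] [Ring K] (σ a : R →+ K) (x : R) :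
    leibnizDefect σ a x x = 2 * σ x * a x - a (x ^ 2) := by
  rw [leibnizDefect_apply, ← two_mul, ← mul_assoc, ← sq]

theorem SecondOrderIdentity.twistedLeibniz_leibnizDefect [NonUnitalCommSemiring R] [CommRing K]
    (h2 : IsLeftRegular (2 : K)) {φ₁ φ₂ : R →ₙ+* K} {a : R →+ K}
    (ha : SecondOrderIdentity φ₁ φ₂ a) :
    TwistedLeibniz φ₁ φ₂ fun x => leibnizDefect (φ₁ + φ₂ : R →+ K) a x x := by
  intro x y
  have hxy_x_y := ha (x * y) x y
  have hxx_y_y := ha (x * x) y y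
  have hyy_x_x := ha (y * y) x x
  have hx_x_y := ha x x y
  have hx_y_y := ha x y y
  rw [show x * y * x * y = x * y * (x * y) by ac_rfl, show x * y * y = x * (y * y) by ac_rfl,
    show x * y * x = x * x * y by ac_rfl] at hxy_x_y
  rw [show x * x * y * y = x * y * (x * y) by ac_rfl] at hxx_y_y
  rw [show y * y * x * x = x * y * (x * y) by ac_rfl, mul_comm (y * y) x] at hyy_x_x
  rw [mul_assoc x y y] at hx_y_y
  simp only [leibnizDefect_apply, AddMonoidHom.add_apply, AddMonoidHom.coe_coe, map_mul]
    at hxy_x_y hxx_y_y hyy_x_x hx_x_y hx_y_y ⊢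
  refine h2 (h2 ?_)
  linear_combination -4 * hxy_x_y + hxx_y_y + hyy_x_x - (φ₁ y + φ₂ y) * hx_x_y
    - (φ₁ x + φ₂ x) * hx_y_y

end LeibnizDefect

namespace TwistedLeibniz

variable {R K : Type*} [CommRing K]

section Polarization

variable [NonUnitalCommSemiring R] {φ₁ φ₂ : R →ₙ+* K} {B : R →+ R →+ K}

theorem polarize_left (hsymm : ∀ x y, B x y = B y x)
    (hB : TwistedLeibniz φ₁ φ₂ fun x => B x x) (x y z : R) :
    2 * B (x * y) (z * y) =
      (φ₁ x * φ₂ z + φ₂ x * φ₁ z) * B y y + 2 * (φ₁ y * φ₂ y) * B x z := by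
  have hsum := hB (x + z) y
  simp only [add_mul, map_add, AddMonoidHom.add_apply] at hsum
  rw [hsymm (z * y) (x * y), hsymm z x] at hsum
  linear_combination hsum - hB x y - hB z y

theorem polarize (h2 : IsLeftRegular (2 : K)) (hsymm : ∀ x y, B x y = B y x)
    (hB : TwistedLeibniz φ₁ φ₂ fun x => B x x) (x y z w : R) :
    B (x * y) (z * w) + B (x * w) (z * y) =
      (φ₁ x * φ₂ z + φ₂ x * φ₁ z) * B y w + (φ₁ y * φ₂ w + φ₂ y * φ₁ w) * B x z := by
  have hsum := hB.polarize_left hsymm x (y + w) z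
  simp only [mul_add, map_add, AddMonoidHom.add_apply] at hsum
  rw [hsymm w y] at hsum
  refine h2 ?_
  linear_combination hsum - hB.polarize_left hsymm x y z - hB.polarize_left hsymm x w z

end Polarization

variable [CommSemiring R] {φ₁ φ₂ : R →ₙ+* K} {B : R →+ R →+ K}

-- Here `u = φ₁ 1 * φ₂ 1` is idempotent, so `1 - 2 * u` is its own inverse, and the Leibniz rule
-- at `(1, 1)` says that `1 - 2 * u` kills `B 1 1`.
theorem apply_one_one (hB : TwistedLeibniz φ₁ φ₂ fun x => B x x) : B 1 1 = 0 := by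
  have hidem₁ : φ₁ 1 * φ₁ 1 = φ₁ 1 := by rw [← map_mul, one_mul]
  have hidem₂ : φ₂ 1 * φ₂ 1 = φ₂ 1 := by rw [← map_mul, one_mul]
  have hidem : φ₁ 1 * φ₂ 1 * (φ₁ 1 * φ₂ 1) = φ₁ 1 * φ₂ 1 := by
    rw [mul_mul_mul_comm, hidem₁, hidem₂]
  have hone : B 1 1 = φ₁ 1 * φ₂ 1 * B 1 1 + φ₁ 1 * φ₂ 1 * B 1 1 := by simpa using hB 1 1
  linear_combination (1 - 2 * (φ₁ 1 * φ₂ 1)) * hone - 4 * B 1 1 * hidem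

theorem map_one_mul_map_one_mul (h2 : IsLeftRegular (2 : K)) (hsymm : ∀ x y, B x y = B y x)
    (hB : TwistedLeibniz φ₁ φ₂ fun x => B x x) (x y : R) :
    φ₁ 1 * φ₂ 1 * B x y = B x y := by
  have hpolar := hB.polarize_left hsymm x 1 y
  simp only [mul_one, hB.apply_one_one, mul_zero, zero_add] at hpolar
  exact (h2 (hpolar.trans (mul_assoc _ _ _))).symm

theorem map_one_mul_left (h2 : IsLeftRegular (2 : K)) (hsymm : ∀ x y, B x y = B y x)
    (hB : TwistedLeibniz φ₁ φ₂ fun x => B x x) (x y : R) : φ₁ 1 * B x y = B x y := by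
  rw [← hB.map_one_mul_map_one_mul h2 hsymm, ← mul_assoc, ← mul_assoc, ← map_mul, one_mul]

theorem map_one_mul_right (h2 : IsLeftRegular (2 : K)) (hsymm : ∀ x y, B x y = B y x)
    (hB : TwistedLeibniz φ₁ φ₂ fun x => B x x) (x y : R) : φ₂ 1 * B x y = B x y := by
  rw [← hB.map_one_mul_map_one_mul h2 hsymm, ← mul_assoc, mul_left_comm, ← map_mul, one_mul]

theorem polarize_one (h2 : IsLeftRegular (2 : K)) (hsymm : ∀ x y, B x y = B y x)
    (hB : TwistedLeibniz φ₁ φ₂ fun x => B x x) (x y z : R) :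
    B (x * y) z + B x (z * y) =
      (φ₁ x * φ₂ z + φ₂ x * φ₁ z) * B 1 y + (φ₁ y + φ₂ y) * B x z := by
  have hpolar := hB.polarize h2 hsymm x y z 1
  rw [mul_one, mul_one, hsymm y 1] at hpolar
  linear_combination hpolar + φ₁ y * hB.map_one_mul_right h2 hsymm x z +
    φ₂ y * hB.map_one_mul_left h2 hsymm x z

theorem eq_leibnizDefect (h2 : IsLeftRegular (2 : K)) (hsymm : ∀ x y, B x y = B y x)
    (hB : TwistedLeibniz φ₁ φ₂ fun x => B x x) :
    B = leibnizDefect (φ₁ + φ₂ : R →+ K) (B 1) := by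
  ext x y
  have hpolar := hB.polarize_one h2 hsymm x y 1
  rw [one_mul, hsymm (x * y) 1, hsymm x 1] at hpolar
  simp only [leibnizDefect_apply, AddMonoidHom.add_apply, AddMonoidHom.coe_coe]
  linear_combination hpolar + φ₁ x * hB.map_one_mul_right h2 hsymm 1 y +
    φ₂ x * hB.map_one_mul_left h2 hsymm 1 y

theorem secondOrderIdentity (h2 : IsLeftRegular (2 : K)) (hsymm : ∀ x y, B x y = B y x)
    (hB : TwistedLeibniz φ₁ φ₂ fun x => B x x) : SecondOrderIdentity φ₁ φ₂ (B 1) := by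
  intro x y z
  have hdefect (u v : R) :
      B u v = (φ₁ u + φ₂ u) * B 1 v + (φ₁ v + φ₂ v) * B 1 u - B 1 (u * v) :=
    DFunLike.congr_fun (DFunLike.congr_fun (hB.eq_leibnizDefect h2 hsymm) u) v
  have hpolar := hB.polarize_one h2 hsymm x y z
  rw [hdefect (x * y) z, hdefect x (z * y), hdefect x z, mul_comm z y, ← mul_assoc x y z,
    map_mul φ₁, map_mul φ₂, map_mul φ₁, map_mul φ₂] at hpolar
  linear_combination -hpolar

end TwistedLeibniz

section Subfield

variable {K : Type*} [Field K] {F : Subfield K}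

theorem IsHom.exists_nonUnitalRingHom {φ : F → K} (hφ : IsHom F φ) :
    ∃ ψ : F →ₙ+* K, ⇑ψ = φ :=
  ⟨{ AddMonoidHom.mk' φ hφ.1 with map_mul' := hφ.2 }, rfl⟩

theorem isQuadratic_iff_isBiadditiveDiagonal {q : F → K} :
    IsQuadratic F q ↔ IsBiadditiveDiagonal q := by
  constructor
  · rintro ⟨B, ⟨hsymm, hleft, hright⟩, hq⟩
    exact ⟨AddMonoidHom.mk' (fun x => AddMonoidHom.mk' (B x) (hright x))
      fun x y => AddMonoidHom.ext (hleft x y), hsymm, hq⟩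
  · rintro ⟨B, hsymm, hq⟩
    exact ⟨fun x y => B x y, ⟨hsymm, fun x y => DFunLike.congr_fun (map_add B x y),
      fun x => map_add (B x)⟩, hq⟩

end Subfield

theorem stmt_3_general {R K : Type*} [CommSemiring R] [CommRing K] (h2 : IsLeftRegular (2 : K))
    (φ₁ φ₂ : R →ₙ+* K) :
    (∀ q : R → K, IsBiadditiveDiagonal q → TwistedLeibniz φ₁ φ₂ q →
      ∃ a : R →+ K, a 1 = 0 ∧ (∀ x, q x = 2 * (φ₁ x + φ₂ x) * a x - a (x ^ 2)) ∧
        SecondOrderIdentity φ₁ φ₂ a) ∧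
    (∀ a : R →+ K, SecondOrderIdentity φ₁ φ₂ a →
      IsBiadditiveDiagonal (fun x => 2 * (φ₁ x + φ₂ x) * a x - a (x ^ 2)) ∧
      TwistedLeibniz φ₁ φ₂ (fun x => 2 * (φ₁ x + φ₂ x) * a x - a (x ^ 2))) := by
  have hdiag (a : R →+ K) (x : R) : leibnizDefect (φ₁ + φ₂ : R →+ K) a x x =
      2 * (φ₁ x + φ₂ x) * a x - a (x ^ 2) := leibnizDefect_self _ a x
  refine ⟨fun q ⟨B, hsymm, hq⟩ hleib => ?_, fun a ha => ?_⟩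
  · obtain rfl : q = fun x => B x x := funext hq
    refine ⟨B 1, hleib.apply_one_one, fun x => ?_, hleib.secondOrderIdentity h2 hsymm⟩
    rw [← hdiag, ← hleib.eq_leibnizDefect h2 hsymm]
  · simp only [← hdiag]
    exact ⟨⟨_, leibnizDefect_comm _ a, fun _ => rfl⟩, ha.twistedLeibniz_leibnizDefect h2⟩

theorem stmt_3 {K : Type*} [Field K] [CharZero K] (F : Subfield K)
    (φ₁ φ₂ : F → K) (hφ₁ : IsHom F φ₁) (hφ₂ : IsHom F φ₂)
    (hφ₁ne : ∃ x : F, φ₁ x ≠ 0) (hφ₂ne : ∃ x : F, φ₂ x ≠ 0) :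
    (∀ q : F → K, IsQuadratic F q →
      (∀ x y : F, q (x * y) = φ₁ x * φ₂ x * q y + φ₁ y * φ₂ y * q x) →
      ∃ a : F → K, (∀ x y : F, a (x + y) = a x + a y) ∧ a 1 = 0 ∧
        (∀ x : F, q x = 2 * (φ₁ x + φ₂ x) * a x - a (x ^ 2)) ∧
        SpadeIdentity F φ₁ φ₂ a) ∧
    (∀ a : F → K, (∀ x y : F, a (x + y) = a x + a y) → SpadeIdentity F φ₁ φ₂ a →
      IsQuadratic F (fun x : F => 2 * (φ₁ x + φ₂ x) * a x - a (x ^ 2)) ∧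
      ∀ x y : F,
        2 * (φ₁ (x * y) + φ₂ (x * y)) * a (x * y) - a ((x * y) ^ 2) =
          φ₁ x * φ₂ x * (2 * (φ₁ y + φ₂ y) * a y - a (y ^ 2)) +
            φ₁ y * φ₂ y * (2 * (φ₁ x + φ₂ x) * a x - a (x ^ 2))) := by
  obtain ⟨φ₁, rfl⟩ := hφ₁.exists_nonUnitalRingHom
  obtain ⟨φ₂, rfl⟩ := hφ₂.exists_nonUnitalRingHom
  have ⟨additive_of_quadratic, quadratic_of_additive⟩ :=
    stmt_3_general (IsRegular.of_ne_zero (two_ne_zero (α := K))).left φ₁ φ₂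
  refine ⟨fun q hq hleib => ?_, fun a ha hspade => ?_⟩
  · obtain ⟨a, ha⟩ := additive_of_quadratic q (isQuadratic_iff_isBiadditiveDiagonal.1 hq) hleib
    exact ⟨a, map_add a, ha⟩
  · exact (quadratic_of_additive (AddMonoidHom.mk' a ha) hspade).imp_left
      isQuadratic_iff_isBiadditiveDiagonal.2
end

section
/- Let K be a field of characteristic zero and F ⊆ K a subfield. Let B : F × F → K be a symmetric bi-additive map such that q(x) = B(x,x) satisfies q(xy) = q(x)y² + x²q(y) for all nonzero x, y ∈ F. Then q(1) = B(1,1) = 0, and defining the additive function a : F → K by a(x) = B(x,1), one has B(x,y) = 2x·a(y) + 2y·a(x) − a(xy) for all x, y ∈ F; in particular q(x) = 4x·a(x) − a(x²) for all x ∈ F. -/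
/-!
Polarizing the Leibniz rule `q (x * y) = y² q x + x² q y` once in `x` and once in `y` turns it into
`B (x y) (z w) + B (x w) (z y) = 2 y w B x z + 2 x z B y w`. Putting `z = w = 1` then expresses `B`
through `a = B · 1`.
-/

section SquareLeibniz

variable {R M : Type*} [CommRing R] [AddCommGroup M] [Module R M]

/-- The Leibniz rule in degree two: the counterpart, for quadratic maps `q`, of the rule
`d (x * y) = y • d x + x • d y` that defines derivations. No additivity of `q` is built in. -/
def SquareLeibniz (q : R → M) : Prop :=
  ∀ x y, q (x * y) = y ^ 2 • q x + x ^ 2 • q y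

theorem SquareLeibniz.map_one {q : R → M} (hq : SquareLeibniz q) : q 1 = 0 := by
  simpa using hq 1 1

theorem SquareLeibniz.of_ne_zero {q : R → M} (hq_zero : q 0 = 0)
    (hq : ∀ x y, x ≠ 0 → y ≠ 0 → q (x * y) = y ^ 2 • q x + x ^ 2 • q y) : SquareLeibniz q := by
  intro x y
  rcases eq_or_ne x 0 with rfl | hx
  · simp [hq_zero]
  rcases eq_or_ne y 0 with rfl | hy
  · simp [hq_zero]
  exact hq x y hx hy

variable {B : R →+ R →+ M}

theorem SquareLeibniz.apply_mul_right_mul_right (hM : IsSMulRegular M (2 : ℕ))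
    (hB : ∀ x y, B x y = B y x) (hq : SquareLeibniz fun x ↦ B x x) (x y z : R) :
    B (x * y) (z * y) = y ^ 2 • B x z + (x * z) • B y y := by
  have hsum := hq (x + z) y
  simp only [add_mul, map_add, AddMonoidHom.add_apply, hB (z * y) (x * y), hB z x] at hsum
  apply hM
  linear_combination (norm := module) hsum - hq x y - hq z y

theorem SquareLeibniz.apply_mul_mul_add_apply_mul_mul (hM : IsSMulRegular M (2 : ℕ))
    (hB : ∀ x y, B x y = B y x) (hq : SquareLeibniz fun x ↦ B x x) (x y z w : R) :
    B (x * y) (z * w) + B (x * w) (z * y) =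
      (2 * (y * w)) • B x z + (2 * (x * z)) • B y w := by
  have hdiag := hq.apply_mul_right_mul_right hM hB
  have hsum := hdiag x (y + w) z
  simp only [mul_add, map_add, AddMonoidHom.add_apply, hB w y] at hsum
  linear_combination (norm := module) hsum - hdiag x y z - hdiag x w z

theorem SquareLeibniz.apply_eq_smul_add_smul_sub (hM : IsSMulRegular M (2 : ℕ))
    (hB : ∀ x y, B x y = B y x) (hq : SquareLeibniz fun x ↦ B x x) (x y : R) :
    B x y = (2 * x) • B y 1 + (2 * y) • B x 1 - B (x * y) 1 := by
  have hpolar := hq.apply_mul_mul_add_apply_mul_mul hM hB x y 1 1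
  simp only [mul_one, one_mul] at hpolar
  linear_combination (norm := module) hpolar

theorem SquareLeibniz.apply_self_eq_smul_sub (hM : IsSMulRegular M (2 : ℕ))
    (hB : ∀ x y, B x y = B y x) (hq : SquareLeibniz fun x ↦ B x x) (x : R) :
    B x x = (4 * x) • B x 1 - B (x ^ 2) 1 := by
  rw [hq.apply_eq_smul_add_smul_sub hM hB x x, sq]
  module

theorem stmt_11_general (hM : IsSMulRegular M (2 : ℕ)) (B : R →+ R →+ M)
    (hB : ∀ x y, B x y = B y x)
    (heq : ∀ x y, x ≠ 0 → y ≠ 0 → B (x * y) (x * y) = y ^ 2 • B x x + x ^ 2 • B y y) :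
    B 1 1 = 0 ∧
    (∀ x y, B x y = (2 * x) • B y 1 + (2 * y) • B x 1 - B (x * y) 1) ∧
    (∀ x, B x x = (4 * x) • B x 1 - B (x ^ 2) 1) :=
  have hq : SquareLeibniz fun x ↦ B x x := .of_ne_zero (by simp) heq
  ⟨hq.map_one, hq.apply_eq_smul_add_smul_sub hM hB, hq.apply_self_eq_smul_sub hM hB⟩

end SquareLeibniz

/-- The bundled form of a symmetric bi-additive map, through which Mathlib's results on additive
maps apply to it. -/
def IsSymmBiadditive.toAddMonoidHom {K : Type*} [Field K] {F : Subfield K} {B : F → F → K}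
    (hB : IsSymmBiadditive F B) : F →+ F →+ K :=
  .mk' (fun x ↦ .mk' (B x) (hB.2.2 x)) fun x y ↦ AddMonoidHom.ext (hB.2.1 x y)

theorem stmt_11 {K : Type*} [Field K] [CharZero K] (F : Subfield K)
    (B : F → F → K) (hB : IsSymmBiadditive F B)
    (q : F → K) (hq : ∀ x : F, q x = B x x)
    (heq : ∀ x y : F, x ≠ 0 → y ≠ 0 →
      q (x * y) = q x * (y : K) ^ 2 + (x : K) ^ 2 * q y)
    (a : F → K) (ha : ∀ x : F, a x = B x 1) :
    q 1 = 0 ∧ B 1 1 = 0 ∧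
    (∀ x y : F, B x y = 2 * (x : K) * a y + 2 * (y : K) * a x - a (x * y)) ∧
    (∀ x : F, q x = 4 * (x : K) * a x - a (x ^ 2)) := by
  obtain rfl : q = fun x ↦ B x x := funext hq
  obtain rfl : a = fun x ↦ B x 1 := funext ha
  have hleibniz : ∀ x y : F, x ≠ 0 → y ≠ 0 →
      B (x * y) (x * y) = y ^ 2 • B x x + x ^ 2 • B y y := by
    simpa [Subfield.smul_def, mul_comm] using heq
  have hgen := stmt_11_general (nsmul_right_injective two_ne_zero) hB.toAddMonoidHom hB.1 hleibniz
  exact ⟨hgen.1, hgen⟩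
end
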